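/- There exist constants c > 0, C > 0, and N such that for every odd integer n ≥ N and every real B with √(log n) + C ≤ B ≤ √n, there exists a set F of functions f : {-1,1}^n → {-1,1} with the following properties: (1) F is closed under restriction (for every f ∈ F, i ∈ [n], b ∈ {-1,1}, the function x ↦ f(x with coordinate i set to b) is in F), closed under negation of input variables (for every f ∈ F and σ ∈ {-1,1}^n, the function x ↦ f(σ₁x₁,...,σ_nx_n) is in F), and closed under negation of outputs (for every f ∈ F, −f ∈ F); (2) every f ∈ F satisfies L₁¹(f) = ∑_{i=1}^n |f̂({i})| ≤ B; (3) every f ∈ F satisfies |E_ε[f] − E_0[f]| ≤ C·B·|ε| for all ε with |ε| ≤ min(1/B, 0.99); and (4) some f ∈ F satisfies L₁³(f) = ∑_{|S|=3} |f̂(S)| ≥ c·B·n. -/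

import Mathlib

open Finset

/-- The real sign `±1` associated to a Boolean, encoding `{-1,1}`. -/
noncomputable def sgn (b : Bool) : ℝ := if b then 1 else -1

/-- Fourier coefficient `f̂(S) = 2^{-n} ∑_x f(x) ∏_{i∈S} x_i` of `f : {-1,1}^n → ℝ`. -/
noncomputable def walshCoeff {n : ℕ} (f : (Fin n → Bool) → ℝ) (S : Finset (Fin n)) : ℝ :=
  (2 ^ n : ℝ)⁻¹ * ∑ x : Fin n → Bool, f x * ∏ i ∈ S, sgn (x i)

/-- Expectation of `f` under `ε`-biased coins:
`E_ε[f] = ∑_x f(x) ∏_i (1 + ε·x_i)/2`. -/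
noncomputable def biasedExp {n : ℕ} (f : (Fin n → Bool) → ℝ) (ε : ℝ) : ℝ :=
  ∑ x : Fin n → Bool, f x * ∏ i : Fin n, (1 + ε * sgn (x i)) / 2


/-!
Let `g` be half the imaginary part of the Riesz product `∏ᵢ (1 + 𝐢 xᵢ / √n)`. It is bounded by `1`,
while its level-three coefficients have a common sign and total size about `n √n / 12`. Put
`p = (B - 1) / √n` and round `p g` at random to a sign function `f`, with `𝔼 f(x) = p g(x)`
independently for each `x`. Then the third level of `f` has size of order `p n √n ≈ B n`.

The class consists of all `±f` restricted to subcubes, with signed inputs. On a subcube of dimension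
`m ≲ B²`, Parseval and Cauchy–Schwarz bound the first level of any sign function by `√m ≲ B`. On
a larger subcube the same argument bounds the contribution of `p g` by `p √m ≤ B - 1`, and by
Hoeffding's inequality and a union bound the rounding noise contributes only about `√(n m 2⁻ᵐ)`,
which is at most `1` because `m ≥ B² ≥ (√(log n) + C)²`. The coin bound has the same proof, with
the level `k` weighted by `|ε|ᵏ ≤ B⁻ᵏ`.
-/
lemma abs_sgn (b : Bool) : |sgn b| = 1 := by cases b <;> simp [sgn]

lemma sgn_mul_self (b : Bool) : sgn b * sgn b = 1 := by cases b <;> simp [sgn]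

lemma sgn_not (b : Bool) : sgn (!b) = -sgn b := by cases b <;> simp [sgn]

lemma sgn_xor (a b : Bool) : sgn (xor a b) = -sgn a * sgn b := by
  cases a <;> cases b <;> simp [sgn]

section Concentration

open MeasureTheory ProbabilityTheory

variable {Ω X : Type*} [MeasurableSpace Ω] {μ : Measure Ω} [Fintype X] {Z : X → Ω → ℝ}

lemma hasSubgaussianMGF_sum_mul (hindep : iIndepFun Z μ) (hZ : ∀ x, HasSubgaussianMGF (Z x) 1 μ)
    (a : X → ℝ) :
    HasSubgaussianMGF (fun ω ↦ ∑ x, a x * Z x ω) (∑ x, a x ^ 2).toNNReal μ := by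
  have hindep' : iIndepFun (fun x ω ↦ a x * Z x ω) μ :=
    hindep.comp (fun x z ↦ a x * z) fun x ↦ measurable_const_mul (a x)
  rw [Real.toNNReal_sum_of_nonneg fun x _ ↦ sq_nonneg (a x)]
  refine HasSubgaussianMGF.sum_of_iIndepFun hindep' fun x _ ↦ ?_
  rw [Real.toNNReal_of_nonneg (sq_nonneg (a x)), ← mul_one (NNReal.mk _ _)]
  exact (hZ x).const_mul (a x)

lemma measureReal_lt_abs_sum_mul_le (hindep : iIndepFun Z μ)
    (hZ : ∀ x, HasSubgaussianMGF (Z x) 1 μ) (a : X → ℝ) {K : ℝ} (hK : 0 ≤ K) :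
    μ.real {ω | K * √(∑ x, a x ^ 2) < |∑ x, a x * Z x ω|} ≤ 2 * Real.exp (-K ^ 2 / 2) := by
  have := hindep.isProbabilityMeasure
  have hvar : 0 ≤ ∑ x, a x ^ 2 := sum_nonneg fun x _ ↦ sq_nonneg (a x)
  obtain hzero | hpos := hvar.eq_or_lt
  · have ha : ∀ x, a x = 0 := by
      simpa [sum_eq_zero_iff_of_nonneg fun x _ ↦ sq_nonneg (a x)] using hzero.symm
    simp only [ha, zero_mul, sum_const_zero, abs_zero, ne_eq, OfNat.ofNat_ne_zero,
      not_false_eq_true, zero_pow, Real.sqrt_zero, mul_zero, lt_self_iff_false, Set.ofPred_false,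
      measureReal_empty]
    positivity
  have hsub := hasSubgaussianMGF_sum_mul hindep hZ a
  have hexp : -(K * √(∑ x, a x ^ 2)) ^ 2 / (2 * ((∑ x, a x ^ 2).toNNReal : ℝ)) = -K ^ 2 / 2 := by
    rw [mul_pow, Real.sq_sqrt hvar, Real.coe_toNNReal _ hvar]
    field_simp
  have hright := hsub.measure_ge_le (ε := K * √(∑ x, a x ^ 2)) (by positivity)
  have hleft := hsub.neg.measure_ge_le (ε := K * √(∑ x, a x ^ 2)) (by positivity)
  rw [hexp] at hright hleft
  refine (measureReal_mono fun ω hω ↦ ?_).trans ((measureReal_union_le _ _).trans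
    ((add_le_add hright hleft).trans_eq (two_mul _).symm))
  exact (lt_abs.mp hω).imp LT.lt.le fun h ↦ by simpa using h.le

lemma exists_forall_abs_sum_mul_le {J : Type*} [Fintype J] (hindep : iIndepFun Z μ)
    (hZ : ∀ x, HasSubgaussianMGF (Z x) 1 μ) (a : J → X → ℝ) {K : ℝ} (hK : 0 ≤ K)
    (hJ : 2 * Fintype.card J < Real.exp (K ^ 2 / 2)) :
    ∃ ω, ∀ j, |∑ x, a j x * Z x ω| ≤ K * √(∑ x, a j x ^ 2) := by
  have := hindep.isProbabilityMeasure
  set bad : J → Set Ω := fun j ↦ {ω | K * √(∑ x, a j x ^ 2) < |∑ x, a j x * Z x ω|}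
  have hbad : μ.real (⋃ j, bad j) < 1 := calc
    μ.real (⋃ j, bad j) ≤ ∑ j, μ.real (bad j) := measureReal_iUnion_fintype_le bad
    _ ≤ ∑ _j : J, 2 * Real.exp (-K ^ 2 / 2) :=
      sum_le_sum fun j _ ↦ measureReal_lt_abs_sum_mul_le hindep hZ (a j) hK
    _ = 2 * Fintype.card J / Real.exp (K ^ 2 / 2) := by
      rw [sum_const, card_univ, nsmul_eq_mul, neg_div, Real.exp_neg]
      ring
    _ < 1 := (div_lt_one (Real.exp_pos _)).mpr hJ
  obtain ⟨ω, hω⟩ : ∃ ω, ω ∉ ⋃ j, bad j := by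
    by_contra! hall
    rw [Set.eq_univ_of_forall hall, probReal_univ] at hbad
    exact hbad.false
  simp only [bad, Set.mem_iUnion, Set.mem_ofPred_eq, not_exists, not_lt] at hω
  exact ⟨ω, hω⟩

lemma exists_isProbabilityMeasure_integral_sgn_eq {q : ℝ} (hq : |q| ≤ 1) :
    ∃ ν : Measure Bool, IsProbabilityMeasure ν ∧ ∫ b, sgn b ∂ν = q := by
  obtain ⟨hq₁, hq₂⟩ := abs_le.mp hq
  refine ⟨bernoulliMeasure true false ⟨(1 + q) / 2, by constructor <;> linarith⟩,
    inferInstance, ?_⟩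
  rw [integral_bernoulliMeasure]
  simp only [sgn, if_true, Bool.false_eq_true, if_false, smul_eq_mul]
  ring

-- Sample each `sgn (f x)` independently with mean `q x` and apply Hoeffding's inequality.
lemma exists_signs_forall_abs_sum_mul_sub_le {J : Type*} [Fintype J] {q : X → ℝ}
    (hq : ∀ x, |q x| ≤ 1) (a : J → X → ℝ) {K : ℝ} (hK : 0 ≤ K)
    (hJ : 2 * Fintype.card J < Real.exp (K ^ 2 / 2)) :
    ∃ f : X → Bool, ∀ j, |∑ x, a j x * (sgn (f x) - q x)| ≤ K * √(∑ x, a j x ^ 2) := by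
  choose ν hν hmean using fun x ↦ exists_isProbabilityMeasure_integral_sgn_eq (hq x)
  have hindep : iIndepFun (fun x (f : X → Bool) ↦ sgn (f x) - q x) (Measure.pi ν) :=
    iIndepFun_pi (X := fun x b ↦ sgn b - q x) fun x ↦ Measurable.of_discrete.aemeasurable
  refine exists_forall_abs_sum_mul_le hindep (fun x ↦ ?_) a hK hJ
  refine HasSubgaussianMGF.of_map (Y := fun f : X → Bool ↦ f x) (X := fun b ↦ sgn b - q x)
    (measurable_pi_apply x).aemeasurable ?_
  rw [(measurePreserving_eval ν x).map_eq, ← hmean x]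
  have hbdd : ∀ᵐ b ∂ν x, sgn b ∈ Set.Icc (-1 : ℝ) 1 :=
    Filter.Eventually.of_forall fun b ↦ abs_le.mp (abs_sgn b).le
  convert hasSubgaussianMGF_of_mem_Icc Measurable.of_discrete.aemeasurable hbdd using 1
  ext
  norm_num

end Concentration

section Walsh

open scoped BigOperators

variable {ι : Type*} [Fintype ι]

/-- The Walsh character `χ_S(x) = ∏_{i ∈ S} x_i` on the cube `{-1,1}^ι`. -/
noncomputable def walsh (S : Finset ι) (x : ι → Bool) : ℝ := ∏ i ∈ S, sgn (x i)

variable [DecidableEq ι]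

lemma expect_prod_apply {K : Type*} [Field K] [CharZero K] (F : ι → Bool → K) :
    𝔼 x : ι → Bool, ∏ i, F i (x i) = ∏ i, 𝔼 b, F i b := by
  simp only [Fintype.expect_eq_sum_div_card, prod_div_distrib, prod_univ_sum,
    Fintype.piFinset_univ, prod_const, Fintype.card_pi, card_univ, Nat.cast_pow]

lemma walsh_mul_walsh_eq_prod (S S' : Finset ι) (x : ι → Bool) :
    walsh S x * walsh S' x =
      ∏ i, (if i ∈ S then sgn (x i) else 1) * if i ∈ S' then sgn (x i) else 1 := by
  simp only [walsh, prod_mul_distrib, prod_ite_mem, univ_inter]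

lemma expect_walsh_mul_walsh (S S' : Finset ι) :
    𝔼 x, walsh S x * walsh S' x = if S = S' then 1 else 0 := by
  simp only [walsh_mul_walsh_eq_prod]
  rw [expect_prod_apply fun i b ↦ (if i ∈ S then sgn b else 1) * if i ∈ S' then sgn b else 1]
  have hcoord (i : ι) : 𝔼 b, ((if i ∈ S then sgn b else 1) * if i ∈ S' then sgn b else 1) =
      if i ∈ S ↔ i ∈ S' then 1 else 0 := by
    rw [Fintype.expect_eq_sum_div_card]
    by_cases hS : i ∈ S <;> by_cases hS' : i ∈ S' <;> simp [hS, hS', sgn]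
  simp only [hcoord, prod_ite_zero, prod_const_one, mem_univ, true_implies, Finset.ext_iff]

lemma expect_sum_mul_walsh_sq (A : Finset (Finset ι)) (c : Finset ι → ℝ) :
    𝔼 x, (∑ S ∈ A, c S * walsh S x) ^ 2 = ∑ S ∈ A, c S ^ 2 := by
  have hexpand (x : ι → Bool) : (∑ S ∈ A, c S * walsh S x) ^ 2 =
      ∑ S ∈ A, ∑ S' ∈ A, c S * c S' * (walsh S x * walsh S' x) := by
    rw [sq, sum_mul_sum]
    exact sum_congr rfl fun S _ ↦ sum_congr rfl fun S' _ ↦ by ring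
  simp only [hexpand, expect_sum_comm, ← mul_expect, expect_walsh_mul_walsh, mul_ite, mul_one,
    mul_zero, sum_ite_eq]
  exact sum_congr rfl fun S hS ↦ by rw [if_pos hS, sq]

lemma abs_expect_mul_le {X : Type*} [Fintype X] {h : X → ℝ} {p : ℝ} (hp : 0 ≤ p)
    (hh : ∀ x, |h x| ≤ p) (u : X → ℝ) : |𝔼 x, h x * u x| ≤ p * √(𝔼 x, u x ^ 2) := by
  have hu : 0 ≤ 𝔼 x, u x ^ 2 := expect_nonneg fun x _ ↦ sq_nonneg (u x)
  have hh2 : 𝔼 x, h x ^ 2 ≤ p ^ 2 := by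
    cases isEmpty_or_nonempty X
    · simpa using sq_nonneg p
    · exact expect_le univ_nonempty fun x _ ↦ sq_le_sq' (abs_le.mp (hh x)).1 (abs_le.mp (hh x)).2
  refine abs_le_of_sq_le_sq ?_ (by positivity)
  rw [mul_pow, Real.sq_sqrt hu]
  exact (expect_mul_sq_le_sq_mul_sq _ _ _).trans (by gcongr)

variable {n : ℕ}

lemma walshCoeff_eq_expect (f : (Fin n → Bool) → ℝ) (S : Finset (Fin n)) :
    walshCoeff f S = 𝔼 x, f x * walsh S x := by
  simp only [walshCoeff, walsh, Fintype.expect_eq_sum_div_card, Fintype.card_pi, Fintype.card_bool,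
    prod_const, card_univ, Fintype.card_fin, Nat.cast_pow, Nat.cast_ofNat, div_eq_inv_mul]

lemma walshCoeff_add (f g : (Fin n → Bool) → ℝ) (S : Finset (Fin n)) :
    walshCoeff (f + g) S = walshCoeff f S + walshCoeff g S := by
  simp only [walshCoeff_eq_expect, Pi.add_apply, add_mul, expect_add_distrib]

lemma walshCoeff_const_mul (c : ℝ) (f : (Fin n → Bool) → ℝ) (S : Finset (Fin n)) :
    walshCoeff (fun x ↦ c * f x) S = c * walshCoeff f S := by
  simp only [walshCoeff_eq_expect, mul_assoc, mul_expect]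

lemma sum_mul_walshCoeff (f : (Fin n → Bool) → ℝ) (A : Finset (Finset (Fin n)))
    (c : Finset (Fin n) → ℝ) :
    ∑ S ∈ A, c S * walshCoeff f S = 𝔼 x, f x * ∑ S ∈ A, c S * walsh S x := by
  simp only [walshCoeff_eq_expect, mul_sum, expect_sum_comm, mul_expect, mul_left_comm]

lemma walshCoeff_sum_mul_walsh (c : Finset (Fin n) → ℝ) (S : Finset (Fin n)) :
    walshCoeff (fun x ↦ ∑ S', c S' * walsh S' x) S = c S := by
  simp only [walshCoeff_eq_expect, sum_mul, mul_assoc, expect_sum_comm, ← mul_expect,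
    expect_walsh_mul_walsh, mul_ite, mul_one, mul_zero, sum_ite_eq', mem_univ, if_true]

lemma abs_sum_mul_walshCoeff_le {f : (Fin n → Bool) → ℝ} {p : ℝ} (hp : 0 ≤ p)
    (hf : ∀ x, |f x| ≤ p) (A : Finset (Finset (Fin n))) (c : Finset (Fin n) → ℝ) :
    |∑ S ∈ A, c S * walshCoeff f S| ≤ p * √(∑ S ∈ A, c S ^ 2) := by
  rw [sum_mul_walshCoeff, ← expect_sum_mul_walsh_sq]
  exact abs_expect_mul_le hp hf _

lemma walshCoeff_eq_zero_of_dependsOn {f : (Fin n → Bool) → ℝ} {S T : Finset (Fin n)}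
    (hf : DependsOn f T) (hS : ¬ S ⊆ T) : walshCoeff f S = 0 := by
  obtain ⟨i, hiS, hiT⟩ := not_subset.mp hS
  rw [walshCoeff, sum_involution fun x _ ↦ Function.update x i (!(x i)), mul_zero]
  · intro x _
    have hflip : f (Function.update x i (!(x i))) = f x :=
      hf fun j hj ↦ Function.update_of_ne (ne_of_mem_of_not_mem hj hiT) _ _
    have hrest : ∏ j ∈ S.erase i, sgn (Function.update x i (!(x i)) j) =
        ∏ j ∈ S.erase i, sgn (x j) :=
      prod_congr rfl fun j hj ↦ by rw [Function.update_of_ne (ne_of_mem_erase hj)]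
    rw [hflip, ← mul_prod_erase S _ hiS, ← mul_prod_erase S _ hiS, hrest, Function.update_self,
      sgn_not]
    ring
  · intro x _ _ hx
    simpa using congrFun hx i
  · exact fun x _ ↦ mem_univ _
  · intro x _
    simp

end Walsh

section BiasedExp

variable {n : ℕ}

lemma biasedExp_eq_sum_pow_mul_walshCoeff (f : (Fin n → Bool) → ℝ) (ε : ℝ) :
    biasedExp f ε = ∑ S, ε ^ #S * walshCoeff f S := by
  have hweight (x : Fin n → Bool) :
      ∏ i, (1 + ε * sgn (x i)) / 2 = (2 ^ n : ℝ)⁻¹ * ∑ S, ε ^ #S * walsh S x := by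
    simp only [prod_one_add, prod_mul_distrib, prod_const, powerset_univ, card_univ,
      Fintype.card_fin, walsh, div_eq_inv_mul, inv_pow]
  simp only [biasedExp, hweight, walshCoeff, walsh, mul_sum]
  rw [sum_comm]
  exact sum_congr rfl fun S _ ↦ sum_congr rfl fun x _ ↦ by ring

lemma biasedExp_add (f g : (Fin n → Bool) → ℝ) (ε : ℝ) :
    biasedExp (f + g) ε = biasedExp f ε + biasedExp g ε := by
  simp only [biasedExp, Pi.add_apply, add_mul, sum_add_distrib]

lemma biasedExp_const_mul (c : ℝ) (f : (Fin n → Bool) → ℝ) (ε : ℝ) :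
    biasedExp (fun x ↦ c * f x) ε = c * biasedExp f ε := by
  simp only [biasedExp, mul_assoc, mul_sum]

lemma biasedExp_zero (f : (Fin n → Bool) → ℝ) : biasedExp f 0 = walshCoeff f ∅ := by
  simp [biasedExp, walshCoeff, mul_sum, mul_comm]

lemma biasedExp_const (c ε : ℝ) : biasedExp (fun _ : Fin n → Bool ↦ c) ε = c := by
  have hfactor : ∑ b, (1 + ε * sgn b) / 2 = 1 := by
    simp only [sgn, Fintype.sum_bool, if_true, Bool.false_eq_true, if_false]
    ring
  rw [biasedExp, ← mul_sum, ← Fintype.piFinset_univ, ← prod_univ_sum (fun _ ↦ univ)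
    fun _ b ↦ (1 + ε * sgn b) / 2, hfactor, prod_const_one, mul_one]

lemma abs_biasedExp_le {f : (Fin n → Bool) → ℝ} {p ε : ℝ} (hf : ∀ x, |f x| ≤ p) (hε : |ε| ≤ 1) :
    |biasedExp f ε| ≤ p := by
  have hweight (x : Fin n → Bool) : 0 ≤ ∏ i, (1 + ε * sgn (x i)) / 2 := by
    refine prod_nonneg fun i _ ↦ ?_
    have : |ε * sgn (x i)| ≤ 1 := by rwa [abs_mul, abs_sgn, mul_one]
    linarith [(abs_le.mp this).1]
  calc |biasedExp f ε| ≤ ∑ x, |f x * ∏ i, (1 + ε * sgn (x i)) / 2| := abs_sum_le_sum_abs _ _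
    _ ≤ biasedExp (fun _ : Fin n → Bool ↦ p) ε := by
      refine sum_le_sum fun x _ ↦ ?_
      rw [abs_mul, abs_of_nonneg (hweight x)]
      exact mul_le_mul_of_nonneg_right (hf x) (hweight x)
    _ = p := biasedExp_const p ε

lemma biasedExp_sub_biasedExp_zero_of_dependsOn {f : (Fin n → Bool) → ℝ} {T : Finset (Fin n)}
    (hf : DependsOn f T) (ε : ℝ) :
    biasedExp f ε - biasedExp f 0 = ∑ S ∈ T.powerset.erase ∅, ε ^ #S * walshCoeff f S := by
  have hT : biasedExp f ε = ∑ S ∈ T.powerset, ε ^ #S * walshCoeff f S := by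
    rw [biasedExp_eq_sum_pow_mul_walshCoeff]
    refine (sum_subset (subset_univ _) fun S _ hS ↦ ?_).symm
    rw [walshCoeff_eq_zero_of_dependsOn hf (mt mem_powerset.mpr hS), mul_zero]
  rw [hT, biasedExp_zero, ← add_sum_erase _ _ (empty_mem_powerset T), card_empty, pow_zero, one_mul,
    add_sub_cancel_left]

lemma one_add_sq_pow_sub_one_le {m : ℕ} {ε : ℝ} (hm : m * ε ^ 2 ≤ 1) :
    (1 + ε ^ 2) ^ m - 1 ≤ 4 * (m * ε ^ 2) := by
  have hnonneg : 0 ≤ m * ε ^ 2 := by positivity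
  have hexp : (1 + ε ^ 2) ^ m ≤ Real.exp (m * ε ^ 2) := by
    rw [Real.exp_nat_mul]
    gcongr
    linarith [Real.add_one_le_exp (ε ^ 2)]
  have htaylor := (abs_le.mp (Real.abs_exp_sub_one_sub_id_le (abs_le.mpr ⟨by linarith, hm⟩))).2
  nlinarith

lemma abs_biasedExp_sub_le_of_dependsOn {f : (Fin n → Bool) → ℝ} {T : Finset (Fin n)} {p ε : ℝ}
    (hT : DependsOn f T) (hp : 0 ≤ p) (hf : ∀ x, |f x| ≤ p) (hε : |ε| ≤ 1) :
    |biasedExp f ε - biasedExp f 0| ≤ p * (2 * (√(#T) * |ε|)) := by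
  obtain hsmall | hlarge := le_or_gt (#T * ε ^ 2) 1
  · have hmass : ∑ S ∈ T.powerset.erase ∅, (ε ^ #S) ^ 2 = (1 + ε ^ 2) ^ #T - 1 := by
      have := sum_pow_mul_eq_add_pow (ε ^ 2) 1 T
      simp only [one_pow, mul_one] at this
      rw [add_comm 1, ← this, ← add_sum_erase _ _ (empty_mem_powerset T)]
      simp only [card_empty, pow_zero, add_sub_cancel_left, pow_right_comm]
    calc |biasedExp f ε - biasedExp f 0| ≤ p * √((1 + ε ^ 2) ^ #T - 1) := by
          rw [biasedExp_sub_biasedExp_zero_of_dependsOn hT, ← hmass]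
          exact abs_sum_mul_walshCoeff_le hp hf _ _
      _ ≤ p * (2 * (√(#T) * |ε|)) := by
          gcongr
          refine Real.sqrt_le_iff.mpr ⟨by positivity, ?_⟩
          rw [mul_pow, mul_pow, Real.sq_sqrt (by positivity), sq_abs]
          linarith [one_add_sq_pow_sub_one_le hsmall]
  · have hone : 1 ≤ √(#T) * |ε| := by
      rw [← Real.sqrt_sq_eq_abs, ← Real.sqrt_mul (by positivity)]
      exact Real.one_le_sqrt.mpr hlarge.le
    calc |biasedExp f ε - biasedExp f 0| ≤ |biasedExp f ε| + |biasedExp f 0| := abs_sub _ _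
      _ ≤ p + p := add_le_add (abs_biasedExp_le hf hε) (abs_biasedExp_le hf (by simp))
      _ ≤ p * (2 * (√(#T) * |ε|)) := by nlinarith

end BiasedExp

section LevelSum

variable {n : ℕ}

/-- The signed sum `∑_{|S| = k} f̂(S)` of the level-`k` Fourier coefficients of `f`. Unlike the
level-`k` `ℓ₁` norm it is linear in `f`. -/
noncomputable def levelSum (f : (Fin n → Bool) → ℝ) (k : ℕ) : ℝ :=
  ∑ S ∈ univ.powersetCard k, walshCoeff f S

lemma levelSum_add (f g : (Fin n → Bool) → ℝ) (k : ℕ) :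
    levelSum (f + g) k = levelSum f k + levelSum g k := by
  simp only [levelSum, walshCoeff_add, sum_add_distrib]

lemma levelSum_const_mul (c : ℝ) (f : (Fin n → Bool) → ℝ) (k : ℕ) :
    levelSum (fun x ↦ c * f x) k = c * levelSum f k := by
  simp only [levelSum, walshCoeff_const_mul, mul_sum]

lemma levelSum_one (f : (Fin n → Bool) → ℝ) : levelSum f 1 = ∑ i, walshCoeff f {i} := by
  simp only [levelSum, powersetCard_one, sum_map, Function.Embedding.coeFn_mk]

lemma abs_levelSum_le_sum_abs_walshCoeff (f : (Fin n → Bool) → ℝ) (k : ℕ) :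
    |levelSum f k| ≤ ∑ S with #S = k, |walshCoeff f S| := by
  rw [← powerset_univ, ← powersetCard_eq_filter]
  exact abs_sum_le_sum_abs _ _

lemma levelSum_eq_zero_of_lt (f : (Fin n → Bool) → ℝ) {k : ℕ} (hk : n < k) : levelSum f k = 0 := by
  rw [levelSum, powersetCard_eq_empty.mpr (by simpa using hk), sum_empty]

lemma levelSum_of_dependsOn {f : (Fin n → Bool) → ℝ} {T : Finset (Fin n)} (hf : DependsOn f T)
    (k : ℕ) : levelSum f k = ∑ S ∈ T.powersetCard k, walshCoeff f S := by
  refine (sum_subset (powersetCard_mono (subset_univ T)) fun S hS hST ↦ ?_).symm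
  refine walshCoeff_eq_zero_of_dependsOn hf fun hsub ↦ hST ?_
  exact mem_powersetCard.mpr ⟨hsub, (mem_powersetCard.mp hS).2⟩

lemma abs_levelSum_le_of_dependsOn {f : (Fin n → Bool) → ℝ} {T : Finset (Fin n)} {p : ℝ}
    (hT : DependsOn f T) (hp : 0 ≤ p) (hf : ∀ x, |f x| ≤ p) (k : ℕ) :
    |levelSum f k| ≤ p * √((#T).choose k) := by
  have := abs_sum_mul_walshCoeff_le hp hf (T.powersetCard k) 1
  simpa [levelSum_of_dependsOn hT] using this

lemma biasedExp_eq_sum_pow_mul_levelSum (f : (Fin n → Bool) → ℝ) (ε : ℝ) :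
    biasedExp f ε = ∑ k ∈ range (n + 1), ε ^ k * levelSum f k := by
  rw [biasedExp_eq_sum_pow_mul_walshCoeff, ← powerset_univ, sum_powerset, card_univ,
    Fintype.card_fin]
  refine sum_congr rfl fun k _ ↦ ?_
  rw [levelSum, mul_sum]
  exact sum_congr rfl fun S hS ↦ by rw [(mem_powersetCard.mp hS).2]

end LevelSum

section Pushforward

open scoped BigOperators

variable {X Y : Type*} [Fintype X] [DecidableEq Y]

/-- The density `u` on the uniform finite space `X`, pushed forward along `φ : X → Y` to a weight on
`Y`: the weight of `y` is the integral of `u` over the fibre of `y`. -/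
noncomputable def pushforward (φ : X → Y) (u : X → ℝ) (y : Y) : ℝ :=
  (Fintype.card X : ℝ)⁻¹ * ∑ x with φ x = y, u x

variable [Fintype Y]

lemma sum_pushforward_mul (φ : X → Y) (u : X → ℝ) (g : Y → ℝ) :
    ∑ y, pushforward φ u y * g y = 𝔼 x, g (φ x) * u x := by
  rw [Fintype.expect_eq_sum_div_card, div_eq_inv_mul, ← sum_fiberwise univ φ, mul_sum]
  refine sum_congr rfl fun y _ ↦ ?_
  rw [pushforward, mul_assoc, sum_mul]
  congr 1
  exact sum_congr rfl fun x hx ↦ by rw [(mem_filter.mp hx).2, mul_comm]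

lemma sum_pushforward_sq_le {φ : X → Y} {M : ℝ} (hM : ∀ y, (#{x | φ x = y} : ℝ) ≤ M)
    (u : X → ℝ) :
    ∑ y, pushforward φ u y ^ 2 ≤ M / Fintype.card X * 𝔼 x, u x ^ 2 := by
  have hfibre (y : Y) : (∑ x with φ x = y, u x) ^ 2 ≤ M * ∑ x with φ x = y, u x ^ 2 :=
    sq_sum_le_card_mul_sum_sq.trans
      (mul_le_mul_of_nonneg_right (hM y) (sum_nonneg fun x _ ↦ sq_nonneg (u x)))
  calc ∑ y, pushforward φ u y ^ 2
      ≤ ∑ y, (Fintype.card X : ℝ)⁻¹ ^ 2 * (M * ∑ x with φ x = y, u x ^ 2) := by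
        refine sum_le_sum fun y _ ↦ ?_
        rw [pushforward, mul_pow]
        gcongr
        exact hfibre y
    _ = M / Fintype.card X * 𝔼 x, u x ^ 2 := by
        rw [← mul_sum, ← mul_sum, sum_fiberwise, Fintype.expect_eq_sum_div_card]
        ring

end Pushforward

section SignedRestriction

variable {n : ℕ}

/-- The map of the cube that fixes the coordinates outside `T` to `σ` and flips the coordinate
`i ∈ T` when `σ i = true`. Precomposition with these maps gives all functions obtained by
restricting coordinates and negating input variables. -/
def signedRestriction (T : Finset (Fin n)) (σ x : Fin n → Bool) : Fin n → Bool :=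
  fun i ↦ if i ∈ T then xor (σ i) (x i) else σ i

lemma signedRestriction_univ_false :
    signedRestriction (univ : Finset (Fin n)) (fun _ ↦ false) = id := by
  ext x i
  simp [signedRestriction]

lemma signedRestriction_xor (T : Finset (Fin n)) (σ ρ x : Fin n → Bool) :
    signedRestriction T σ (fun i ↦ xor (ρ i) (x i)) =
      signedRestriction T (fun i ↦ if i ∈ T then xor (σ i) (ρ i) else σ i) x := by
  ext i
  by_cases hi : i ∈ T <;> simp [signedRestriction, hi]

lemma signedRestriction_update (T : Finset (Fin n)) (σ x : Fin n → Bool) (i : Fin n) (b : Bool) :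
    signedRestriction T σ (Function.update x i b) =
      signedRestriction (T.erase i) (fun j ↦ if j = i ∧ i ∈ T then xor (σ j) b else σ j) x := by
  ext j
  obtain rfl | hji := eq_or_ne j i
  · by_cases hj : j ∈ T <;> simp [signedRestriction, hj]
  · by_cases hj : j ∈ T <;> simp [signedRestriction, hj, hji]

lemma dependsOn_comp_signedRestriction (f : (Fin n → Bool) → ℝ) (T : Finset (Fin n))
    (σ : Fin n → Bool) : DependsOn (f ∘ signedRestriction T σ) T := by
  intro x y hxy
  refine congrArg f (funext fun i ↦ ?_)
  by_cases hi : i ∈ T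
  · simp only [signedRestriction, hxy i hi]
  · simp only [signedRestriction, hi, if_false]

lemma card_filter_signedRestriction_eq_le (T : Finset (Fin n)) (σ y : Fin n → Bool) :
    #{x | signedRestriction T σ x = y} ≤ 2 ^ (n - #T) := by
  have hinj : Set.InjOn (fun (x : Fin n → Bool) (i : ↥Tᶜ) ↦ x i)
      ({x | signedRestriction T σ x = y} : Finset (Fin n → Bool)) := by
    intro x hx x' hx' hxx'
    have hT := (mem_filter.mp hx).2.trans (mem_filter.mp hx').2.symm
    ext i
    by_cases hi : i ∈ T
    · simpa [signedRestriction, hi] using congrFun hT i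
    · rw [show x i = x' i from congrFun hxx' ⟨i, mem_compl.mpr hi⟩]
  calc #{x | signedRestriction T σ x = y} ≤ #(univ : Finset (↥Tᶜ → Bool)) :=
        card_le_card_of_injOn _ (fun x _ ↦ mem_univ _) hinj
    _ = 2 ^ (n - #T) := by
        rw [card_univ, Fintype.card_fun, Fintype.card_bool, Fintype.card_coe, card_compl,
          Fintype.card_fin]

end SignedRestriction

section RandomLevelSums

variable {n : ℕ}

/-- The level sums of all signed restrictions of `u` are within `κ` standard deviations of `0`,
where the deviation is that of a `u` with independent centred values of unit variance: the `k`-th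
level sum on a subcube of dimension `m` then has variance `2⁻ᵐ * m.choose k`. -/
def HasRandomLevelSums (κ : ℝ) (u : (Fin n → Bool) → ℝ) : Prop :=
  ∀ (T : Finset (Fin n)) (σ : Fin n → Bool) (k : ℕ),
    |levelSum (u ∘ signedRestriction T σ) k| ≤ κ * √((2 ^ #T : ℝ)⁻¹ * (#T).choose k)

/-- The weight on the cube whose pairing with `u` is the `k`-th level sum of the signed restriction
of `u` given by `T` and `σ`. -/
noncomputable def levelWeight (T : Finset (Fin n)) (σ : Fin n → Bool) (k : ℕ) :
    (Fin n → Bool) → ℝ :=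
  pushforward (signedRestriction T σ) fun x ↦ ∑ S ∈ T.powersetCard k, walsh S x

lemma sum_levelWeight_mul (T : Finset (Fin n)) (σ : Fin n → Bool) (k : ℕ)
    (u : (Fin n → Bool) → ℝ) :
    ∑ y, levelWeight T σ k y * u y = levelSum (u ∘ signedRestriction T σ) k := by
  have hexpand := sum_mul_walshCoeff (u ∘ signedRestriction T σ) (T.powersetCard k) 1
  simp only [Pi.one_apply, one_mul] at hexpand
  rw [levelWeight, sum_pushforward_mul, levelSum_of_dependsOn
    (dependsOn_comp_signedRestriction u T σ), hexpand]
  rfl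

lemma sum_levelWeight_sq_le (T : Finset (Fin n)) (σ : Fin n → Bool) (k : ℕ) :
    ∑ y, levelWeight T σ k y ^ 2 ≤ (2 ^ #T : ℝ)⁻¹ * (#T).choose k := by
  have hfibre (y : Fin n → Bool) :
      (#{x | signedRestriction T σ x = y} : ℝ) ≤ (2 : ℝ) ^ (n - #T) := by
    exact_mod_cast card_filter_signedRestriction_eq_le T σ y
  have hparseval := expect_sum_mul_walsh_sq (T.powersetCard k) 1
  simp only [Pi.one_apply, one_mul, one_pow, sum_const, nsmul_eq_mul, mul_one,
    card_powersetCard] at hparseval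
  refine (sum_pushforward_sq_le hfibre _).trans_eq ?_
  have hT : #T ≤ n := by simpa using card_le_univ T
  rw [hparseval, pow_sub₀ _ two_ne_zero hT]
  simp

lemma two_mul_succ_mul_four_pow_lt_exp (hn : 1 ≤ n) :
    2 * (4 ^ n * (n + 1)) < Real.exp (3 * n) := by
  have htwo : (2 : ℝ) ≤ 2 ^ n := le_self_pow₀ one_le_two (by lia)
  have hsucc : (n + 1 : ℝ) ≤ 2 ^ n := by exact_mod_cast n.lt_two_pow_self
  have hexp : 16 < Real.exp 3 := calc
    (16 : ℝ) < 2.7 ^ 3 := by norm_num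
    _ ≤ Real.exp 1 ^ 3 := by gcongr; linarith [Real.exp_one_gt_d9]
    _ = Real.exp 3 := by rw [← Real.exp_nat_mul]; norm_num
  calc (2 * (4 ^ n * (n + 1)) : ℝ) ≤ 2 ^ n * (4 ^ n * 2 ^ n) := by gcongr
    _ = 16 ^ n := by rw [← mul_pow, ← mul_pow]; norm_num
    _ < Real.exp 3 ^ n := by gcongr
    _ = Real.exp (3 * n) := by rw [← Real.exp_nat_mul, mul_comm]

lemma exists_abs_eq_one_hasRandomLevelSums_sub (hn : 1 ≤ n) {q : (Fin n → Bool) → ℝ}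
    (hq : ∀ x, |q x| ≤ 1) :
    ∃ f : (Fin n → Bool) → ℝ, (∀ x, |f x| = 1) ∧ HasRandomLevelSums √(6 * n) (f - q) := by
  have hcard : 2 * (Fintype.card (Finset (Fin n) × (Fin n → Bool) × Fin (n + 1)) : ℝ) <
      Real.exp (√(6 * n) ^ 2 / 2) := by
    rw [Real.sq_sqrt (by positivity)]
    convert two_mul_succ_mul_four_pow_lt_exp hn using 2
    · simp only [Fintype.card_prod, Fintype.card_finset, Fintype.card_fun, Fintype.card_bool,
        Fintype.card_fin, Nat.cast_mul, Nat.cast_pow, Nat.cast_ofNat, Nat.cast_add, Nat.cast_one]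
      rw [← mul_assoc, ← mul_pow]
      norm_num
    · ring
  obtain ⟨f, hf⟩ := exists_signs_forall_abs_sum_mul_sub_le hq
    (fun j : Finset (Fin n) × (Fin n → Bool) × Fin (n + 1) ↦ levelWeight j.1 j.2.1 j.2.2)
    (Real.sqrt_nonneg (6 * n)) hcard
  refine ⟨fun x ↦ sgn (f x), fun x ↦ abs_sgn (f x), fun T σ k ↦ ?_⟩
  obtain hk | hk := lt_or_ge n k
  · rw [levelSum_eq_zero_of_lt _ hk, abs_zero]
    positivity
  · rw [← sum_levelWeight_mul]
    refine (hf ⟨T, σ, ⟨k, Nat.lt_succ_of_le hk⟩⟩).trans ?_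
    gcongr
    exact sum_levelWeight_sq_le T σ k

end RandomLevelSums

section Numerics

lemma pow_four_le_two_pow {n : ℕ} (hn : 16 ≤ n) : n ^ 4 ≤ 2 ^ n := by
  induction n, hn using Nat.le_induction with
  | base => norm_num
  | succ m hm ih =>
    have hcube : 16 * m ^ 3 ≤ m ^ 4 := by rw [pow_succ m 3, mul_comm]; gcongr
    have hsq : m ^ 2 ≤ m ^ 3 := Nat.pow_le_pow_right (by lia) (by norm_num)
    have hlin : m ≤ m ^ 3 := Nat.le_self_pow (by norm_num) m
    calc (m + 1) ^ 4 ≤ 2 * m ^ 4 := by nlinarith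
      _ ≤ 2 ^ (m + 1) := by rw [pow_succ' 2 m]; gcongr

lemma six_mul_mul_choose_three_le_two_pow {n : ℕ} (hn : 16 ≤ n) :
    (6 * n * n.choose 3 : ℝ) ≤ 2 ^ n := by
  have hchoose : (n.choose 3 : ℝ) ≤ n ^ 3 / 6 := by
    simpa [Nat.factorial] using Nat.choose_le_pow_div (α := ℝ) 3 n
  calc (6 * n * n.choose 3 : ℝ) ≤ 6 * n * (n ^ 3 / 6) := by gcongr
    _ = n ^ 4 := by ring
    _ ≤ 2 ^ n := by exact_mod_cast pow_four_le_two_pow hn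

lemma pow_three_div_le_choose_three {n : ℕ} (hn : 6 ≤ n) : (n : ℝ) ^ 3 / 24 ≤ n.choose 3 := by
  have hn' : (6 : ℝ) ≤ n := by exact_mod_cast hn
  have hsub : ((n + 1 - 3 : ℕ) : ℝ) = n - 2 := by
    rw [Nat.cast_sub (by lia)]
    push_cast
    ring
  calc (n ^ 3 / 24 : ℝ) ≤ (2 / 3 * n) ^ 3 / 6 := by
        rw [mul_pow]
        linarith [pow_nonneg (by linarith : (0 : ℝ) ≤ n) 3]
    _ ≤ (n - 2 : ℝ) ^ 3 / 6 := by gcongr; linarith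
    _ ≤ n.choose 3 := by
        simpa [← hsub, Nat.factorial] using Nat.pow_le_choose (α := ℝ) 3 n

lemma one_add_le_two_rpow {t : ℝ} (ht : 1 ≤ t) : 1 + t ≤ (2 : ℝ) ^ t := by
  have := one_add_mul_self_le_rpow_one_add (s := 1) (by norm_num) ht
  rwa [mul_one, one_add_one_eq_two] at this

variable {n m : ℕ}

lemma six_mul_mul_le_two_pow (hn : 1 ≤ n) (hm : (√(Real.logb 2 n) + 100) ^ 2 ≤ m) :
    (6 * n * m : ℝ) ≤ 2 ^ m := by
  have hn' : (1 : ℝ) ≤ n := by exact_mod_cast hn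
  set L := Real.logb 2 n
  have hL : 0 ≤ L := Real.logb_nonneg one_lt_two hn'
  have ht : √L + 100 ≤ √m := Real.le_sqrt_of_sq_le hm
  have hgap : L + 100 * √m ≤ m := by
    nlinarith [Real.sqrt_nonneg L, Real.sq_sqrt hL, Real.sq_sqrt (Nat.cast_nonneg (α := ℝ) m)]
  have hbern : 1 + 50 * √m ≤ (2 : ℝ) ^ (50 * √m) :=
    one_add_le_two_rpow (by linarith [Real.sqrt_nonneg L])
  have hsq : (6 * m : ℝ) ≤ ((2 : ℝ) ^ (50 * √m)) ^ 2 := calc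
    (6 * m : ℝ) ≤ (1 + 50 * √m) ^ 2 := by
      nlinarith [Real.sqrt_nonneg m, Real.sq_sqrt (Nat.cast_nonneg (α := ℝ) m)]
    _ ≤ ((2 : ℝ) ^ (50 * √m)) ^ 2 := by gcongr
  calc (6 * n * m : ℝ) = 2 ^ L * (6 * m) := by
        rw [Real.rpow_logb two_pos (by norm_num) (by linarith)]
        ring
    _ ≤ 2 ^ L * ((2 : ℝ) ^ (50 * √m)) ^ 2 := by gcongr
    _ = (2 : ℝ) ^ (L + 100 * √m) := by
        rw [← Real.rpow_mul_natCast two_pos.le, ← Real.rpow_add two_pos]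
        ring_nf
    _ ≤ (2 : ℝ) ^ (m : ℝ) := Real.rpow_le_rpow_of_exponent_le one_le_two hgap
    _ = 2 ^ m := Real.rpow_natCast 2 m

lemma sq_mul_six_mul_mul_one_add_pow_le_two_pow {B : ℝ} (hn : 1 ≤ n)
    (hB : √(Real.logb 2 n) + 100 ≤ B) (hm : 4 * B ^ 2 < m) :
    (n ^ 2 * (6 * n) * (1 + (B ^ 2)⁻¹) ^ m : ℝ) ≤ 2 ^ m := by
  have hn' : (1 : ℝ) ≤ n := by exact_mod_cast hn
  have hL : 0 ≤ Real.logb 2 n := Real.logb_nonneg one_lt_two hn'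
  have hLB : Real.logb 2 n ≤ B ^ 2 := by
    nlinarith [Real.sqrt_nonneg (Real.logb 2 n), Real.sq_sqrt hL]
  have hB100 : 100 ≤ B := by linarith [Real.sqrt_nonneg (Real.logb 2 n)]
  set a : ℝ := (2 : ℝ) ^ (m / 8 : ℝ)
  have ha : 0 < a := by positivity
  have ha8 : a ^ 8 = 2 ^ m := by
    rw [← Real.rpow_mul_natCast two_pos.le, ← Real.rpow_natCast]
    norm_num
  have h6a : 6 ≤ a := by
    have := one_add_le_two_rpow (t := (m / 8 : ℝ)) (by nlinarith)
    nlinarith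
  have hna : (n : ℝ) ≤ a ^ 2 := by
    rw [← Real.rpow_logb two_pos (by norm_num) (by linarith : (0 : ℝ) < n),
      ← Real.rpow_mul_natCast two_pos.le]
    refine Real.rpow_le_rpow_of_exponent_le one_le_two ?_
    push_cast
    linarith
  have hexp : (1 + (B ^ 2)⁻¹) ^ m ≤ a := by
    refine (pow_le_pow_iff_left₀ (by positivity) ha.le (by norm_num : 8 ≠ 0)).mp ?_
    rw [ha8, pow_right_comm]
    have hx : (B ^ 2)⁻¹ ≤ (100 ^ 2)⁻¹ := by gcongr
    gcongr
    calc (1 + (B ^ 2)⁻¹) ^ 8 ≤ (1 + (100 ^ 2)⁻¹ : ℝ) ^ 8 := by gcongr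
      _ ≤ 2 := by norm_num
  calc (n ^ 2 * (6 * n) * (1 + (B ^ 2)⁻¹) ^ m : ℝ) ≤ (a ^ 2) ^ 2 * (a * a ^ 2) * a := by gcongr
    _ = a ^ 8 := by ring
    _ = 2 ^ m := ha8

lemma choose_mul_pow_le_one_add_pow (m k : ℕ) {x : ℝ} (hx : 0 ≤ x) :
    m.choose k * x ^ k ≤ (1 + x) ^ m := by
  obtain hk | hk := lt_or_ge m k
  · rw [Nat.choose_eq_zero_of_lt hk, Nat.cast_zero, zero_mul]
    positivity
  · rw [add_comm, add_pow]
    simp only [one_pow, mul_one]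
    rw [mul_comm]
    exact single_le_sum (f := fun j ↦ x ^ j * (m.choose j : ℝ)) (fun j _ ↦ by positivity)
      (mem_range_succ_iff.mpr hk)

end Numerics

section Noise

variable {n : ℕ}

lemma abs_biasedExp_sub_le_of_abs_levelSum_le {f : (Fin n → Bool) → ℝ} {R B ε : ℝ} (hB : 0 < B)
    (hf : ∀ k, |levelSum f k| ≤ R * B ^ k) (hε : |ε| ≤ 1 / B) :
    |biasedExp f ε - biasedExp f 0| ≤ n * R * (B * |ε|) := by
  have : 0 ≤ R := by simpa using (abs_nonneg _).trans (hf 0)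
  have hdiff : biasedExp f ε - biasedExp f 0 =
      ∑ k ∈ range n, ε ^ (k + 1) * levelSum f (k + 1) := by
    simp [biasedExp_eq_sum_pow_mul_levelSum, sum_range_succ']
  have hterm (k : ℕ) : |ε ^ (k + 1) * levelSum f (k + 1)| ≤ R * (B * |ε|) := calc
    |ε ^ (k + 1) * levelSum f (k + 1)| = |ε| ^ k * |ε| * |levelSum f (k + 1)| := by
      rw [abs_mul, abs_pow, pow_succ]
    _ ≤ (1 / B) ^ k * |ε| * (R * B ^ (k + 1)) := by gcongr; exact hf _
    _ = R * (B * |ε|) := by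
      rw [one_div, inv_pow, pow_succ]
      field_simp
  calc |biasedExp f ε - biasedExp f 0|
      ≤ ∑ k ∈ range n, |ε ^ (k + 1) * levelSum f (k + 1)| := hdiff ▸ abs_sum_le_sum_abs _ _
    _ ≤ ∑ _k ∈ range n, R * (B * |ε|) := sum_le_sum fun k _ ↦ hterm k
    _ = n * R * (B * |ε|) := by rw [sum_const, card_range, nsmul_eq_mul, mul_assoc]

lemma sqrt_mul_sqrt_inv_mul_le_one {a b c : ℝ} (ha : 0 ≤ a) (hc : 0 < c) (h : a * b ≤ c) :
    √a * √(c⁻¹ * b) ≤ 1 := by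
  rw [← Real.sqrt_mul ha, mul_left_comm]
  exact Real.sqrt_le_one.mpr ((inv_mul_le_one₀ hc).mpr h)

variable {u : (Fin n → Bool) → ℝ}

lemma HasRandomLevelSums.abs_levelSum_three_le (hu : HasRandomLevelSums √(6 * n) u) (hn : 16 ≤ n) :
    |levelSum u 3| ≤ 1 := by
  have := hu univ (fun _ ↦ false) 3
  rw [signedRestriction_univ_false, Function.comp_id, card_univ, Fintype.card_fin] at this
  exact this.trans (sqrt_mul_sqrt_inv_mul_le_one (by positivity) (by positivity)
    (six_mul_mul_choose_three_le_two_pow hn))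

lemma HasRandomLevelSums.abs_levelSum_one_le (hu : HasRandomLevelSums √(6 * n) u) (hn : 1 ≤ n)
    {T : Finset (Fin n)} (hT : (√(Real.logb 2 n) + 100) ^ 2 ≤ #T) (σ : Fin n → Bool) :
    |levelSum (u ∘ signedRestriction T σ) 1| ≤ 1 := by
  have := hu T σ 1
  rw [Nat.choose_one_right] at this
  exact this.trans (sqrt_mul_sqrt_inv_mul_le_one (by positivity) (by positivity)
    (six_mul_mul_le_two_pow hn hT))

lemma HasRandomLevelSums.abs_biasedExp_sub_le (hu : HasRandomLevelSums √(6 * n) u) (hn : 1 ≤ n)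
    {T : Finset (Fin n)} {B ε : ℝ} (hB : √(Real.logb 2 n) + 100 ≤ B) (hT : 4 * B ^ 2 < #T)
    (hε : |ε| ≤ 1 / B) (σ : Fin n → Bool) :
    |biasedExp (u ∘ signedRestriction T σ) ε - biasedExp (u ∘ signedRestriction T σ) 0| ≤
      B * |ε| := by
  have hB0 : 0 < B := by linarith [Real.sqrt_nonneg (Real.logb 2 n)]
  set R := √(6 * n) * √((2 ^ #T : ℝ)⁻¹ * (1 + (B ^ 2)⁻¹) ^ #T)
  have hlevel (k : ℕ) : |levelSum (u ∘ signedRestriction T σ) k| ≤ R * B ^ k := by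
    refine (hu T σ k).trans ?_
    rw [mul_assoc]
    gcongr
    rw [← Real.sqrt_sq (pow_nonneg hB0.le k), ← Real.sqrt_mul (by positivity), mul_assoc]
    gcongr
    rw [← div_le_iff₀ (by positivity), div_eq_mul_inv, pow_right_comm, ← inv_pow]
    exact choose_mul_pow_le_one_add_pow _ _ (by positivity)
  have hnR : n * R ≤ 1 := by
    have hκ : n * √(6 * n) = √(n ^ 2 * (6 * n)) := by
      rw [Real.sqrt_mul (sq_nonneg _), Real.sqrt_sq n.cast_nonneg]
    rw [← mul_assoc, hκ]
    exact sqrt_mul_sqrt_inv_mul_le_one (by positivity) (by positivity)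
      (sq_mul_six_mul_mul_one_add_pow_le_two_pow hn hB hT)
  calc _ ≤ n * R * (B * |ε|) := abs_biasedExp_sub_le_of_abs_levelSum_le hB0 hlevel hε
    _ ≤ B * |ε| := mul_le_of_le_one_left (by positivity) hnR

end Noise

section SignedRestrictionClass

variable {n : ℕ}

/-- The closure of `{f}` under restrictions, negations of input variables and negations of
outputs. -/
def signedRestrictionClass (f : (Fin n → Bool) → ℝ) : Set ((Fin n → Bool) → ℝ) :=
  {h | ∃ (T : Finset (Fin n)) (σ : Fin n → Bool) (τ : Bool),
    h = fun x ↦ sgn τ * (f ∘ signedRestriction T σ) x}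

variable {f h : (Fin n → Bool) → ℝ}

lemma self_mem_signedRestrictionClass (f : (Fin n → Bool) → ℝ) : f ∈ signedRestrictionClass f :=
  ⟨univ, fun _ ↦ false, true, by simp [signedRestriction_univ_false, sgn]⟩

lemma update_mem_signedRestrictionClass (hh : h ∈ signedRestrictionClass f) (i : Fin n) (b : Bool) :
    (fun x ↦ h (Function.update x i b)) ∈ signedRestrictionClass f := by
  obtain ⟨T, σ, τ, rfl⟩ := hh
  simp only [Function.comp_apply, signedRestriction_update]
  exact ⟨_, _, τ, rfl⟩

lemma xor_mem_signedRestrictionClass (hh : h ∈ signedRestrictionClass f) (ρ : Fin n → Bool) :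
    (fun x ↦ h fun i ↦ xor (ρ i) (x i)) ∈ signedRestrictionClass f := by
  obtain ⟨T, σ, τ, rfl⟩ := hh
  simp only [Function.comp_apply, signedRestriction_xor]
  exact ⟨_, _, τ, rfl⟩

lemma neg_mem_signedRestrictionClass (hh : h ∈ signedRestrictionClass f) :
    (fun x ↦ -h x) ∈ signedRestrictionClass f := by
  obtain ⟨T, σ, τ, rfl⟩ := hh
  exact ⟨T, σ, !τ, by simp only [sgn_not, neg_mul]⟩

lemma eq_one_or_eq_neg_one_of_mem_signedRestrictionClass (hf : ∀ x, |f x| = 1)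
    (hh : h ∈ signedRestrictionClass f) (x : Fin n → Bool) : h x = 1 ∨ h x = -1 := by
  obtain ⟨T, σ, τ, rfl⟩ := hh
  refine eq_or_eq_neg_of_abs_eq ?_
  rw [abs_mul, abs_sgn, one_mul, Function.comp_apply, hf]

lemma walshCoeff_xor (h : (Fin n → Bool) → ℝ) (ρ : Fin n → Bool) (S : Finset (Fin n)) :
    walshCoeff (fun x ↦ h fun i ↦ xor (ρ i) (x i)) S = (∏ i ∈ S, -sgn (ρ i)) * walshCoeff h S := by
  have hinv : Function.Involutive fun (x : Fin n → Bool) i ↦ xor (ρ i) (x i) := by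
    intro x
    ext i
    simp
  rw [walshCoeff_eq_expect, walshCoeff_eq_expect, mul_expect]
  refine Fintype.expect_equiv (hinv.toPerm _) _ _ fun x ↦ ?_
  have hsign : walsh S x = (∏ i ∈ S, -sgn (ρ i)) * walsh S (hinv.toPerm _ x) := by
    simp only [walsh, Function.Involutive.coe_toPerm, ← prod_mul_distrib, sgn_xor]
    refine prod_congr rfl fun i _ ↦ ?_
    linear_combination -sgn (x i) * sgn_mul_self (ρ i)
  rw [hsign, Function.Involutive.coe_toPerm]
  ring

lemma exists_levelSum_one_xor_eq_sum_abs (h : (Fin n → Bool) → ℝ) :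
    ∃ ρ : Fin n → Bool,
      levelSum (fun x ↦ h fun i ↦ xor (ρ i) (x i)) 1 = ∑ i, |walshCoeff h {i}| := by
  refine ⟨fun i ↦ decide (walshCoeff h {i} ≤ 0), ?_⟩
  rw [levelSum_one]
  refine sum_congr rfl fun i _ ↦ ?_
  rw [walshCoeff_xor, prod_singleton]
  obtain hi | hi := le_or_gt (walshCoeff h {i}) 0
  · simp [sgn, hi, abs_of_nonpos]
  · simp [sgn, hi.not_ge, abs_of_pos hi]

lemma sum_abs_walshCoeff_singleton_le_of_mem_signedRestrictionClass {B : ℝ}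
    (hf : ∀ T σ, |levelSum (f ∘ signedRestriction T σ) 1| ≤ B)
    (hh : h ∈ signedRestrictionClass f) : ∑ i, |walshCoeff h {i}| ≤ B := by
  obtain ⟨ρ, hρ⟩ := exists_levelSum_one_xor_eq_sum_abs h
  obtain ⟨T, σ, τ, hτ⟩ := xor_mem_signedRestrictionClass hh ρ
  rw [← hρ, hτ, levelSum_const_mul]
  refine (le_abs_self _).trans ?_
  rw [abs_mul, abs_sgn, one_mul]
  exact hf T σ

lemma abs_biasedExp_sub_le_of_mem_signedRestrictionClass {ε M : ℝ}
    (hf : ∀ T σ, |biasedExp (f ∘ signedRestriction T σ) ε -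
      biasedExp (f ∘ signedRestriction T σ) 0| ≤ M)
    (hh : h ∈ signedRestrictionClass f) : |biasedExp h ε - biasedExp h 0| ≤ M := by
  obtain ⟨T, σ, τ, rfl⟩ := hh
  rw [biasedExp_const_mul, biasedExp_const_mul, ← mul_sub, abs_mul, abs_sgn, one_mul]
  exact hf T σ

end SignedRestrictionClass

section CubicBias

variable {n : ℕ}

/-- Half the imaginary part of the Riesz product `∏ᵢ (1 + 𝐢 xᵢ / √n)`: a bounded function whose
level-`3` coefficients all have the same sign and size `n^{-3/2} / 2`. -/
noncomputable def cubicBias (x : Fin n → Bool) : ℝ :=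
  (∏ i, (1 + Complex.I / √n * sgn (x i))).im / 2

lemma abs_cubicBias_le_one (x : Fin n → Bool) : |cubicBias x| ≤ 1 := by
  have hfactor (i : Fin n) : ‖1 + Complex.I / √n * sgn (x i)‖ ^ 2 = 1 + (n : ℝ)⁻¹ := by
    have hri : 1 + Complex.I / √n * sgn (x i) = (1 : ℝ) + (sgn (x i) / √n : ℝ) * Complex.I := by
      push_cast
      ring
    rw [hri, Complex.sq_norm, Complex.normSq_add_mul_I, div_pow, Real.sq_sqrt n.cast_nonneg,
      sq (sgn _), sgn_mul_self, one_pow, one_div]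
  have hexp : (1 + (n : ℝ)⁻¹) ^ n ≤ 2 ^ 2 :=
    Real.one_add_inv_pow_le_exp.trans (by linarith [Real.exp_one_lt_d9])
  have hnorm : ‖∏ i, (1 + Complex.I / √n * sgn (x i))‖ ≤ 2 := by
    refine (sq_le_sq₀ (norm_nonneg _) zero_le_two).mp ?_
    simpa only [norm_prod, ← prod_pow, hfactor, prod_const, card_univ, Fintype.card_fin] using hexp
  rw [cubicBias, abs_div, abs_two, div_le_one two_pos]
  exact (Complex.abs_im_le_norm _).trans hnorm

lemma abs_mul_cubicBias_le {p : ℝ} (hp : 0 ≤ p) (x : Fin n → Bool) : |p * cubicBias x| ≤ p := by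
  rw [abs_mul, abs_of_nonneg hp]
  exact mul_le_of_le_one_right hp (abs_cubicBias_le_one x)

lemma cubicBias_eq_sum (x : Fin n → Bool) :
    cubicBias x = ∑ S, ((Complex.I / √n) ^ #S).im / 2 * walsh S x := by
  simp only [cubicBias, prod_one_add, powerset_univ, prod_mul_distrib, prod_const, Complex.im_sum,
    ← Complex.ofReal_prod, Complex.im_mul_ofReal, sum_div, walsh]
  exact sum_congr rfl fun S _ ↦ by ring

lemma walshCoeff_cubicBias (S : Finset (Fin n)) :
    walshCoeff cubicBias S = ((Complex.I / √n) ^ #S).im / 2 := by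
  rw [← walshCoeff_sum_mul_walsh (fun S : Finset (Fin n) ↦ ((Complex.I / √n) ^ #S).im / 2) S]
  simp only [← cubicBias_eq_sum]

lemma levelSum_cubicBias_three :
    levelSum (cubicBias (n := n)) 3 = -(n.choose 3 / (2 * √n ^ 3)) := by
  have him : ((Complex.I / √n) ^ 3).im = -(1 / √n ^ 3) := by
    rw [div_pow, Complex.I_pow_three, ← Complex.ofReal_pow, Complex.div_ofReal_im, Complex.neg_im,
      Complex.I_im, neg_div]
  have hcoeff (S) (hS : S ∈ (univ : Finset (Fin n)).powersetCard 3) :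
      walshCoeff cubicBias S = -(1 / √n ^ 3) / 2 := by
    rw [walshCoeff_cubicBias, (mem_powersetCard.mp hS).2, him]
  rw [levelSum, sum_congr rfl hcoeff, sum_const, card_powersetCard, card_univ, Fintype.card_fin,
    nsmul_eq_mul]
  ring

end CubicBias

section Rounding

variable {n : ℕ} {B p : ℝ} {f q : (Fin n → Bool) → ℝ}

lemma comp_signedRestriction_eq_add (f q : (Fin n → Bool) → ℝ) (T : Finset (Fin n))
    (σ : Fin n → Bool) :
    f ∘ signedRestriction T σ = q ∘ signedRestriction T σ + (f - q) ∘ signedRestriction T σ := by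
  rw [← Pi.add_comp, add_sub_cancel]

lemma mul_sqrt_card_le (hp : 0 ≤ p) (hpB : p * √n ≤ B - 1) (T : Finset (Fin n)) :
    p * √(#T) ≤ B - 1 := by
  refine le_trans ?_ hpB
  gcongr
  simpa using card_le_univ T

lemma abs_levelSum_one_comp_signedRestriction_le (hn : 1 ≤ n)
    (hB : √(Real.logb 2 n) + 100 ≤ B) (hp : 0 ≤ p) (hpB : p * √n ≤ B - 1)
    (hf : ∀ x, |f x| = 1) (hq : ∀ x, |q x| ≤ p) (hnoise : HasRandomLevelSums √(6 * n) (f - q))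
    (T : Finset (Fin n)) (σ : Fin n → Bool) :
    |levelSum (f ∘ signedRestriction T σ) 1| ≤ B := by
  have hB0 : 0 ≤ B := by linarith [Real.sqrt_nonneg (Real.logb 2 n)]
  obtain hT | hT := le_or_gt (#T : ℝ) (B ^ 2)
  · have := abs_levelSum_le_of_dependsOn (dependsOn_comp_signedRestriction f T σ) zero_le_one
      (fun x ↦ (hf _).le) 1
    rw [Nat.choose_one_right, one_mul] at this
    exact this.trans (Real.sqrt_le_iff.mpr ⟨hB0, hT⟩)
  · have hmain := abs_levelSum_le_of_dependsOn (dependsOn_comp_signedRestriction q T σ) hp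
      (fun x ↦ hq _) 1
    have hrest := hnoise.abs_levelSum_one_le hn (hT.le.trans' (by gcongr)) σ
    rw [Nat.choose_one_right] at hmain
    rw [comp_signedRestriction_eq_add f q, levelSum_add]
    linarith [abs_add_le (levelSum (q ∘ signedRestriction T σ) 1)
      (levelSum ((f - q) ∘ signedRestriction T σ) 1), mul_sqrt_card_le hp hpB T]

lemma abs_biasedExp_comp_signedRestriction_sub_le (hn : 1 ≤ n)
    (hB : √(Real.logb 2 n) + 100 ≤ B) (hp : 0 ≤ p) (hpB : p * √n ≤ B - 1)
    (hf : ∀ x, |f x| = 1) (hq : ∀ x, |q x| ≤ p) (hnoise : HasRandomLevelSums √(6 * n) (f - q))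
    {ε : ℝ} (hε : |ε| ≤ 1) (hεB : |ε| ≤ 1 / B) (T : Finset (Fin n)) (σ : Fin n → Bool) :
    |biasedExp (f ∘ signedRestriction T σ) ε - biasedExp (f ∘ signedRestriction T σ) 0| ≤
      4 * (B * |ε|) := by
  have hB0 : 0 ≤ B := by linarith [Real.sqrt_nonneg (Real.logb 2 n)]
  have hBε : 0 ≤ B * |ε| := by positivity
  obtain hT | hT := le_or_gt (#T : ℝ) (4 * B ^ 2)
  · have hsqrt : √(#T) ≤ 2 * B := Real.sqrt_le_iff.mpr ⟨by positivity, by linarith⟩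
    have := abs_biasedExp_sub_le_of_dependsOn (dependsOn_comp_signedRestriction f T σ) zero_le_one
      (fun x ↦ (hf _).le) hε
    linarith [mul_le_mul_of_nonneg_right hsqrt (abs_nonneg ε)]
  · have hmain := abs_biasedExp_sub_le_of_dependsOn (dependsOn_comp_signedRestriction q T σ) hp
      (fun x ↦ hq _) hε
    have hrest := hnoise.abs_biasedExp_sub_le hn hB hT hεB σ
    have hscale := mul_le_mul_of_nonneg_right (mul_sqrt_card_le hp hpB T) (abs_nonneg ε)
    rw [comp_signedRestriction_eq_add f q, biasedExp_add, biasedExp_add, add_sub_add_comm]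
    refine (abs_add_le _ _).trans ((add_le_add hmain hrest).trans ?_)
    linarith [abs_nonneg ε]

lemma sub_one_le_abs_levelSum_three (hn : 16 ≤ n) (hp : 0 ≤ p)
    (hnoise : HasRandomLevelSums √(6 * n) (f - fun x ↦ p * cubicBias x)) :
    p * √n * n / 48 - 1 ≤ |levelSum f 3| := by
  have hsplit : levelSum f 3 = -(p * (n.choose 3 / (2 * √n ^ 3))) +
      levelSum (f - fun x ↦ p * cubicBias x) 3 := by
    conv_lhs => rw [← add_sub_cancel (fun x ↦ p * cubicBias x) f]
    rw [levelSum_add, levelSum_const_mul, levelSum_cubicBias_three, mul_neg]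
  have hmain : √n * n / 48 ≤ n.choose 3 / (2 * √n ^ 3) := by
    have hpow : √n * n * √n ^ 3 = (n : ℝ) ^ 3 := by
      linear_combination (n : ℝ) * (√n ^ 2 + n) * Real.sq_sqrt (n.cast_nonneg (α := ℝ))
    rw [le_div_iff₀ (by positivity)]
    linarith [pow_three_div_le_choose_three (n := n) (by lia)]
  have hrest := abs_le.mp (hnoise.abs_levelSum_three_le hn)
  rw [hsplit, abs_eq_max_neg]
  refine le_max_of_le_right ?_
  linarith [mul_le_mul_of_nonneg_left hmain hp]

end Rounding

theorem exists_class_large_level_three_general :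
    ∃ c : ℝ, 0 < c ∧ ∃ C : ℝ, 0 < C ∧ ∃ N : ℕ,
      ∀ n : ℕ, N ≤ n →
        ∀ B : ℝ, √(Real.logb 2 n) + C ≤ B → B ≤ √n →
          ∃ F : Set ((Fin n → Bool) → ℝ),
            (∀ f ∈ F, ∀ x, f x = 1 ∨ f x = -1) ∧
            (∀ f ∈ F, ∀ i : Fin n, ∀ b : Bool, (fun x ↦ f (Function.update x i b)) ∈ F) ∧
            (∀ f ∈ F, ∀ σ : Fin n → Bool, (fun x ↦ f (fun i ↦ xor (σ i) (x i))) ∈ F) ∧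
            (∀ f ∈ F, (fun x ↦ -f x) ∈ F) ∧
            (∀ f ∈ F, ∑ i : Fin n, |walshCoeff f {i}| ≤ B) ∧
            (∀ f ∈ F, ∀ ε : ℝ, |ε| ≤ min (1 / B) 0.99 →
              |biasedExp f ε - biasedExp f 0| ≤ C * B * |ε|) ∧
            (∃ f ∈ F, c * B * n ≤
              ∑ S ∈ univ.filter (fun S : Finset (Fin n) ↦ #S = 3), |walshCoeff f S|) := by
  refine ⟨1 / 200, by norm_num, 100, by norm_num, 16, fun n hn B hB hBn ↦ ?_⟩
  have hn1 : 1 ≤ n := by lia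
  have hB100 : 100 ≤ B := by linarith [Real.sqrt_nonneg (Real.logb 2 n)]
  set p := (B - 1) / √n
  have hp : 0 ≤ p := div_nonneg (by linarith) (Real.sqrt_nonneg _)
  have hpn : p * √n = B - 1 := div_mul_cancel₀ _ (by positivity)
  have hp1 : p ≤ 1 := (div_le_one (by positivity)).mpr (by linarith)
  have hq := abs_mul_cubicBias_le (n := n) hp
  obtain ⟨f, hf, hnoise⟩ :=
    exists_abs_eq_one_hasRandomLevelSums_sub hn1 fun x ↦ (hq x).trans hp1
  refine ⟨signedRestrictionClass f,
    fun h hh ↦ eq_one_or_eq_neg_one_of_mem_signedRestrictionClass hf hh,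
    fun h hh ↦ update_mem_signedRestrictionClass hh, fun h hh ↦ xor_mem_signedRestrictionClass hh,
    fun h hh ↦ neg_mem_signedRestrictionClass hh,
    fun h hh ↦ sum_abs_walshCoeff_singleton_le_of_mem_signedRestrictionClass
      (abs_levelSum_one_comp_signedRestriction_le hn1 hB hp hpn.le hf hq hnoise) hh,
    fun h hh ε hε ↦ ?_, f, self_mem_signedRestrictionClass f, ?_⟩
  · obtain ⟨hεB, hε1⟩ := le_min_iff.mp hε
    have := abs_biasedExp_sub_le_of_mem_signedRestrictionClass
      (abs_biasedExp_comp_signedRestriction_sub_le hn1 hB hp hpn.le hf hq hnoise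
        (hε1.trans (by norm_num)) hεB) hh
    nlinarith [abs_nonneg ε]
  · refine le_trans ?_ (abs_levelSum_le_sum_abs_walshCoeff f 3)
    have := sub_one_le_abs_levelSum_three hn hp hnoise
    rw [hpn] at this
    have : (16 : ℝ) ≤ n := by exact_mod_cast hn
    nlinarith

/-- there are constants c, C > 0 and N such that for every odd
n ≥ N and every √(log₂ n) + C ≤ B ≤ √n there is a class F of Boolean functions
on n bits, closed under restriction, negation of input variables, and negation
of outputs, with L₁¹(F) ≤ B and a coin theorem C·B·|ε| for |ε| ≤ min(1/B, 0.99),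
but with L₁³(F) ≥ c·B·n. -/
theorem exists_class_large_level_three :
    ∃ c : ℝ, 0 < c ∧ ∃ C : ℝ, 0 < C ∧ ∃ N : ℕ,
      ∀ n : ℕ, Odd n → N ≤ n →
        ∀ B : ℝ, Real.sqrt (Real.logb 2 n) + C ≤ B → B ≤ Real.sqrt n →
          ∃ F : Set ((Fin n → Bool) → ℝ),
            (∀ f ∈ F, ∀ x, f x = 1 ∨ f x = -1) ∧
            (∀ f ∈ F, ∀ i : Fin n, ∀ b : Bool,
              (fun x => f (Function.update x i b)) ∈ F) ∧
            (∀ f ∈ F, ∀ σ : Fin n → Bool,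
              (fun x => f (fun i => xor (σ i) (x i))) ∈ F) ∧
            (∀ f ∈ F, (fun x => -f x) ∈ F) ∧
            (∀ f ∈ F, ∑ i : Fin n, |walshCoeff f {i}| ≤ B) ∧
            (∀ f ∈ F, ∀ ε : ℝ, |ε| ≤ min (1 / B) 0.99 →
              |biasedExp f ε - biasedExp f 0| ≤ C * B * |ε|) ∧
            (∃ f ∈ F, c * B * n ≤
              ∑ S ∈ Finset.univ.filter (fun S : Finset (Fin n) => S.card = 3),
                |walshCoeff f S|) := by
  obtain ⟨c, hc, C, hC, N, h⟩ := exists_class_large_level_three_general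
  exact ⟨c, hc, C, hC, N, fun n _ ↦ h n⟩
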